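/- Under the hypotheses of the unbounded Kaplansky theorem (B densely defined closed in H, A bounded, A, B, AB all normal, A*AB ⊂ BA*A and AB*B ⊂ B*BA), the following operator identities hold: BA(BA)* = BB*A*A and (BA)*BA = B*BA*A; in particular BB*A*A = B*BA*A. -/

import Mathlib

noncomputable section

variable {H : Type*} [NormedAddCommGroup H] [InnerProductSpace ℂ H] [CompleteSpace H]

namespace LinearPMap

/-- The composition `S ∘ T` of two partially defined linear operators, with its natural
domain `{x ∈ D(T) : T x ∈ D(S)}`. -/
noncomputable def pcomp (S T : H →ₗ.[ℂ] H) : H →ₗ.[ℂ] H :=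
  { domain := (S.domain.comap T.toFun).map T.domain.subtype
    toFun := (S.toFun.comp ((T.toFun.comp (S.domain.comap T.toFun).subtype).codRestrict
        S.domain fun x => x.2)).comp
      (Submodule.equivMapOfInjective T.domain.subtype Subtype.val_injective
        (S.domain.comap T.toFun)).symm.toLinearMap }

/-- A bounded operator viewed as a partially defined operator with domain the
whole space. -/
noncomputable def ofCLM (A : H →L[ℂ] H) : H →ₗ.[ℂ] H :=
  A.toLinearMap.toPMap ⊤

/-- An unbounded densely defined operator is *normal* if it is closed and
`N N* = N* N` (including equality of the natural domains). -/
def IsNormalPMap (N : H →ₗ.[ℂ] H) : Prop :=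
  Dense (N.domain : Set H) ∧ N.IsClosed ∧ N.pcomp N.adjoint = N.adjoint.pcomp N

end LinearPMap

open LinearPMap ContinuousLinearMap

/-- A bounded operator `T` is *normal* if `T T* = T* T`. -/
def IsNormalOp (T : H →L[ℂ] H) : Prop :=
  T * ContinuousLinearMap.adjoint T = ContinuousLinearMap.adjoint T * T

theorem mem_graph_pcomp (S T : H →ₗ.[ℂ] H) (x z : H) :
    (x, z) ∈ (S.pcomp T).graph ↔ ∃ y, (x, y) ∈ T.graph ∧ (y, z) ∈ S.graph := by
  have key : ∀ (v : T.domain) (hv : T v ∈ S.domain) (h : (v : H) ∈ (S.pcomp T).domain),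
      (S.pcomp T) ⟨v, h⟩ = S ⟨T v, hv⟩ := by
    intro v hv h
    have e : (Submodule.equivMapOfInjective T.domain.subtype Subtype.val_injective
        (S.domain.comap T.toFun)).symm ⟨v, h⟩ = ⟨v, hv⟩ := by
      rw [LinearEquiv.symm_apply_eq]
      rfl
    change S.toFun (((T.toFun.comp (S.domain.comap T.toFun).subtype).codRestrict
        S.domain fun x => x.2) ((Submodule.equivMapOfInjective T.domain.subtype
          Subtype.val_injective (S.domain.comap T.toFun)).symm ⟨v, h⟩)) = _
    rw [e]
    rfl
  constructor
  · intro h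
    rw [LinearPMap.mem_graph_iff] at h
    obtain ⟨⟨x', hx'⟩, h1, h2⟩ := h
    obtain ⟨v, hv, rfl⟩ := id hx'
    have hv' : T v ∈ S.domain := hv
    dsimp at h1 h2
    subst h1
    refine ⟨T v, T.mem_graph v, ?_⟩
    rw [← h2]
    have := key v hv' hx'
    erw [this]
    exact S.mem_graph ⟨T v, hv'⟩
  · rintro ⟨y, h1, h2⟩
    rw [LinearPMap.mem_graph_iff] at h1 h2
    obtain ⟨v, hv1, hv2⟩ := h1
    obtain ⟨w, hw1, hw2⟩ := h2
    dsimp at hv1 hv2 hw1 hw2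
    subst hv1
    have hTv : T v ∈ S.domain := by rw [hv2, ← hw1]; exact w.2
    have hd : (v : H) ∈ (S.pcomp T).domain := ⟨v, hTv, rfl⟩
    have : (⟨T v, hTv⟩ : S.domain) = w := Subtype.ext (by simp [hv2, hw1])
    rw [← hw2, ← this, ← key v hTv hd]
    exact (S.pcomp T).mem_graph ⟨v, hd⟩

theorem mem_graph_ofCLM (A : H →L[ℂ] H) (x y : H) :
    (x, y) ∈ (ofCLM A).graph ↔ y = A x := by
  rw [LinearPMap.mem_graph_iff]
  constructor
  · rintro ⟨v, h1, h2⟩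
    dsimp at h1 h2
    rw [← h2, ← h1]
    rfl
  · rintro rfl
    exact ⟨⟨x, trivial⟩, rfl, rfl⟩

theorem mem_graph_adj {T : H →ₗ.[ℂ] H} (hT : Dense (T.domain : Set H)) (x y : H) :
    (x, y) ∈ T.adjoint.graph ↔ ∀ a b, (a, b) ∈ T.graph → inner ℂ b x = inner ℂ a y := by
  rw [LinearPMap.adjoint_graph_eq_graph_adjoint hT, Submodule.mem_adjoint_iff]
  simp only [sub_eq_zero]

/-- Orthogonal decomposition of `H × H` along the graph of a closed operator. -/
theorem graph_decomp {T : H →ₗ.[ℂ] H} (hT : Dense (T.domain : Set H)) (hc : T.IsClosed)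
    (p q : H) : ∃ x s y t, (x, s) ∈ T.graph ∧ (y, t) ∈ T.adjoint.graph ∧
      p = x - t ∧ q = s + y := by
  let G : Submodule ℂ (WithLp 2 (H × H)) :=
    T.graph.comap (WithLp.linearEquiv 2 ℂ (H × H)).toLinearMap
  have hG : IsClosed (G : Set (WithLp 2 (H × H))) :=
    IsClosed.preimage (WithLp.prod_continuous_ofLp 2 H H) hc
  have : CompleteSpace G := hG.completeSpace_coe
  obtain ⟨g, hg, h, hh, e⟩ := G.exists_add_mem_mem_orthogonal (WithLp.toLp 2 (p, q))
  refine ⟨g.fst, g.snd, h.snd, -h.fst, hg, ?_, ?_, ?_⟩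
  · rw [mem_graph_adj hT]
    intro a b hab
    have := (Submodule.mem_orthogonal G h).1 hh (WithLp.toLp 2 (a, b)) hab
    rw [WithLp.prod_inner_apply] at this
    simp only [inner_neg_right]
    exact eq_neg_of_add_eq_zero_right this
  · have := congrArg WithLp.fst e
    simpa using this
  · have := congrArg WithLp.snd e
    simpa using this

theorem exists_one_add_adj_mul {T : H →ₗ.[ℂ] H} (hT : Dense (T.domain : Set H))
    (hc : T.IsClosed) (p : H) : ∃ x w, (x, w) ∈ (T.adjoint.pcomp T).graph ∧ x + w = p := by
  obtain ⟨x, s, y, t, h1, h2, h3, h4⟩ := graph_decomp hT hc p 0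
  refine ⟨x, -t, (mem_graph_pcomp _ _ _ _).2 ⟨s, h1, ?_⟩, by rw [h3]; abel⟩
  have : s = -y := eq_neg_of_add_eq_zero_left h4.symm
  rw [this]
  exact T.adjoint.graph.neg_mem h2

theorem exists_one_add_mul_adj {T : H →ₗ.[ℂ] H} (hT : Dense (T.domain : Set H))
    (hc : T.IsClosed) (p : H) : ∃ x w, (x, w) ∈ (T.pcomp T.adjoint).graph ∧ x + w = p := by
  obtain ⟨x, s, y, t, h1, h2, h3, h4⟩ := graph_decomp hT hc 0 p
  refine ⟨y, s, (mem_graph_pcomp _ _ _ _).2 ⟨t, h2, ?_⟩, by rw [h4]; abel⟩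
  have : x = t := sub_eq_zero.1 h3.symm
  rw [← this]
  exact h1

/-- `T* T` is symmetric. -/
theorem symm_adj_mul {T : H →ₗ.[ℂ] H} (hT : Dense (T.domain : Set H)) {x y u v : H}
    (h : (x, y) ∈ (T.adjoint.pcomp T).graph) (h' : (u, v) ∈ (T.adjoint.pcomp T).graph) :
    inner ℂ y u = inner ℂ x v := by
  obtain ⟨s, hs, hs'⟩ := (mem_graph_pcomp _ _ _ _).1 h
  obtain ⟨t, ht, ht'⟩ := (mem_graph_pcomp _ _ _ _).1 h'
  rw [mem_graph_adj hT] at hs' ht'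
  rw [← ht' _ _ hs, ← inner_conj_symm, ← hs' _ _ ht, inner_conj_symm]

/-- `T T*` is symmetric. -/
theorem symm_mul_adj {T : H →ₗ.[ℂ] H} (hT : Dense (T.domain : Set H)) {x y u v : H}
    (h : (x, y) ∈ (T.pcomp T.adjoint).graph) (h' : (u, v) ∈ (T.pcomp T.adjoint).graph) :
    inner ℂ y u = inner ℂ x v := by
  obtain ⟨s, hs, hs'⟩ := (mem_graph_pcomp _ _ _ _).1 h
  obtain ⟨t, ht, ht'⟩ := (mem_graph_pcomp _ _ _ _).1 h'
  rw [mem_graph_adj hT] at hs ht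
  rw [ht _ _ hs', ← inner_conj_symm x, hs _ _ ht', inner_conj_symm]

/-- `T* T` is positive. -/
theorem pos_adj_mul {T : H →ₗ.[ℂ] H} (hT : Dense (T.domain : Set H)) {x y : H}
    (h : (x, y) ∈ (T.adjoint.pcomp T).graph) : ∃ s : H, inner ℂ x y = inner ℂ s s := by
  obtain ⟨s, hs, hs'⟩ := (mem_graph_pcomp _ _ _ _).1 h
  rw [mem_graph_adj hT] at hs'
  exact ⟨s, (hs' _ _ hs).symm⟩

theorem pos_sum_zero {x s : H} (h : inner ℂ x x + inner ℂ s s = (0 : ℂ)) : x = 0 := by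
  have h2 := congrArg RCLike.re h
  rw [_root_.map_add, ← norm_sq_eq_re_inner, ← norm_sq_eq_re_inner] at h2
  have h' : ‖x‖ ^ 2 + ‖s‖ ^ 2 = 0 := by simpa using h2
  have : ‖x‖ ^ 2 = 0 := by nlinarith [sq_nonneg ‖x‖, sq_nonneg ‖s‖]
  simpa using this

theorem dense_adj_mul {T : H →ₗ.[ℂ] H} (hT : Dense (T.domain : Set H)) (hc : T.IsClosed) :
    Dense ((T.adjoint.pcomp T).domain : Set H) := by
  rw [Submodule.dense_iff_topologicalClosure_eq_top,
    Submodule.topologicalClosure_eq_top_iff, Submodule.eq_bot_iff]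
  intro u hu
  obtain ⟨x, w, h, rfl⟩ := exists_one_add_adj_mul hT hc u
  have h0 : inner ℂ x (x + w) = 0 :=
    (Submodule.mem_orthogonal _ _).1 hu x (LinearPMap.mem_domain_of_mem_graph h)
  obtain ⟨s, hs⟩ := pos_adj_mul hT h
  rw [inner_add_right, hs] at h0
  have hx := pos_sum_zero h0
  subst hx
  have : w = 0 := LinearPMap.graph_fst_eq_zero_snd _ h rfl
  simp [this]

/-- `T* T` is self-adjoint (maximality half). -/
theorem selfadj_adj_mul {T : H →ₗ.[ℂ] H} (hT : Dense (T.domain : Set H)) (hc : T.IsClosed)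
    {w v : H} (h : ∀ a b, (a, b) ∈ (T.adjoint.pcomp T).graph → inner ℂ v a = inner ℂ w b) :
    (w, v) ∈ (T.adjoint.pcomp T).graph := by
  obtain ⟨x, y, hxy, e⟩ := exists_one_add_adj_mul hT hc (w + v)
  obtain ⟨a, b, hab, e'⟩ := exists_one_add_adj_mul hT hc (w - x)
  have h1 := h a b hab
  have h2 := symm_adj_mul hT hxy hab
  have h3 : inner ℂ (w - x) (w - x) = 0 := by
    nth_rewrite 2 [← e']
    have h4 : inner ℂ (x + y) a = inner ℂ (w + v) a := by rw [e]
    simp only [inner_sub_left, inner_add_left, inner_add_right] at h4 ⊢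
    rw [← h1, ← h2]
    linear_combination -h4
  have h5 : w = x := sub_eq_zero.1 (inner_self_eq_zero.1 h3)
  have h6 : v = y := by rw [h5] at e; exact (add_left_cancel e).symm
  rw [h5, h6]
  exact hxy

/-- Core argument: a symmetric `T` with `1 + T` onto and `A*A Q ⊂ T`, `Q = B*B`, equals
`Q A*A`. -/
theorem eq_of_core {B T : H →ₗ.[ℂ] H} (A : H →L[ℂ] H) (hB : Dense (B.domain : Set H))
    (hc : B.IsClosed)
    (hsym : ∀ x y u v, (x, y) ∈ T.graph → (u, v) ∈ T.graph → inner ℂ y u = inner ℂ x v)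
    (hsurj : ∀ p, ∃ x w, (x, w) ∈ T.graph ∧ x + w = p)
    (hsub : ∀ x y, (x, y) ∈ (B.adjoint.pcomp B).graph →
      (x, (ContinuousLinearMap.adjoint A * A) y) ∈ T.graph) :
    T = (B.adjoint.pcomp B).pcomp (ofCLM (ContinuousLinearMap.adjoint A * A)) := by
  have hle : ∀ x y, (x, y) ∈ T.graph →
      ((ContinuousLinearMap.adjoint A * A) x, y) ∈ (B.adjoint.pcomp B).graph := by
    intro x y hxy
    refine selfadj_adj_mul hB hc fun a b hab => ?_
    rw [hsym _ _ _ _ hxy (hsub _ _ hab)]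
    simp only [mul_apply_eq_comp, ContinuousLinearMap.adjoint_inner_left,
      ContinuousLinearMap.adjoint_inner_right]
  apply LinearPMap.eq_of_eq_graph
  ext ⟨x, y⟩
  rw [mem_graph_pcomp]
  simp only [mem_graph_ofCLM, exists_eq_left]
  refine ⟨hle x y, fun h => ?_⟩
  obtain ⟨x', y', h', e⟩ := hsurj (x + y)
  have hd := (B.adjoint.pcomp B).graph.sub_mem h (hle _ _ h')
  rw [Prod.mk_sub_mk, ← _root_.map_sub] at hd
  obtain ⟨s, hs⟩ := pos_adj_mul hB hd
  have ey : y - y' = -(x - x') := by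
    rw [eq_neg_iff_add_eq_zero]
    have : (x + y) - (x' + y') = 0 := by rw [e, sub_self]
    rw [← this]; abel
  rw [ey, inner_neg_right, mul_apply_eq_comp,
    ContinuousLinearMap.adjoint_inner_left] at hs
  have hA0 : A (x - x') = 0 := by
    apply pos_sum_zero (s := s)
    rw [← hs]; ring
  have hy0 : y - y' = 0 := by
    refine LinearPMap.graph_fst_eq_zero_snd _ hd ?_
    rw [mul_apply_eq_comp, hA0, _root_.map_zero]
  have hx0 : x - x' = 0 := by
    rw [hy0] at ey; exact neg_eq_zero.1 ey.symm
  rw [sub_eq_zero.1 hx0, sub_eq_zero.1 hy0]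
  exact h'

theorem isClosed_pcomp_ofCLM {B : H →ₗ.[ℂ] H} (hc : B.IsClosed) (A : H →L[ℂ] H) :
    (B.pcomp (ofCLM A)).IsClosed := by
  have : ((B.pcomp (ofCLM A)).graph : Set (H × H)) =
      (fun p : H × H => (A p.1, p.2)) ⁻¹' (B.graph : Set (H × H)) := by
    ext ⟨x, y⟩
    simp only [SetLike.mem_coe, mem_graph_pcomp, mem_graph_ofCLM, exists_eq_left,
      Set.mem_preimage]
  unfold LinearPMap.IsClosed
  rw [this]
  exact IsClosed.preimage (by fun_prop) hc

/-- Under the hypotheses of the unbounded Kaplansky theorem (`B` densely defined and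
closed, `A` bounded, `A`, `B`, `AB` all normal, `A* A B ⊂ B A* A` and
`A B* B ⊂ B* B A`) one has the operator identities
`BA (BA)* = B B* A* A` and `(BA)* BA = B* B A* A`; in particular
`B B* A* A = B* B A* A`. -/
theorem kaplansky_unbounded_identities [TopologicalSpace.SeparableSpace H] (B : H →ₗ.[ℂ] H) (A : H →L[ℂ] H)
    (hBdense : Dense (B.domain : Set H)) (hBclosed : B.IsClosed)
    (hA : IsNormalOp A) (hB : IsNormalPMap B) (hAB : IsNormalPMap ((ofCLM A).pcomp B))
    (h1 : (ofCLM (ContinuousLinearMap.adjoint A * A)).pcomp B ≤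
      B.pcomp (ofCLM (ContinuousLinearMap.adjoint A * A)))
    (h2 : (ofCLM A).pcomp (B.adjoint.pcomp B) ≤ (B.adjoint.pcomp B).pcomp (ofCLM A)) :
    (B.pcomp (ofCLM A)).pcomp (B.pcomp (ofCLM A)).adjoint =
      (B.pcomp B.adjoint).pcomp (ofCLM (ContinuousLinearMap.adjoint A * A)) ∧
    (B.pcomp (ofCLM A)).adjoint.pcomp (B.pcomp (ofCLM A)) =
      (B.adjoint.pcomp B).pcomp (ofCLM (ContinuousLinearMap.adjoint A * A)) ∧
    (B.pcomp B.adjoint).pcomp (ofCLM (ContinuousLinearMap.adjoint A * A)) =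
      (B.adjoint.pcomp B).pcomp (ofCLM (ContinuousLinearMap.adjoint A * A)) := by
  have hgraph : ∀ x y, (x, y) ∈ (B.pcomp (ofCLM A)).graph ↔ (A x, y) ∈ B.graph := by
    intro x y
    simp only [mem_graph_pcomp, mem_graph_ofCLM, exists_eq_left]
  have h1' : ∀ x y, (x, y) ∈ B.graph → ((ContinuousLinearMap.adjoint A * A) x,
      (ContinuousLinearMap.adjoint A * A) y) ∈ B.graph := by
    intro x y h
    have := LinearPMap.le_graph_of_le h1 ((mem_graph_pcomp _ _ _ _).2
      ⟨y, h, (mem_graph_ofCLM _ _ _).2 rfl⟩)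
    simpa only [mem_graph_pcomp, mem_graph_ofCLM, exists_eq_left] using this
  have h2' : ∀ x y, (x, y) ∈ (B.adjoint.pcomp B).graph →
      (A x, A y) ∈ (B.adjoint.pcomp B).graph := by
    intro x y h
    have := LinearPMap.le_graph_of_le h2 ((mem_graph_pcomp _ _ _ _).2
      ⟨y, h, (mem_graph_ofCLM _ _ _).2 rfl⟩)
    rw [mem_graph_pcomp] at this
    simpa only [mem_graph_ofCLM, exists_eq_left] using this
  have hBB : B.pcomp B.adjoint = B.adjoint.pcomp B := hB.2.2
  have hSc := isClosed_pcomp_ofCLM hBclosed A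
  have hSd : Dense ((B.pcomp (ofCLM A)).domain : Set H) := by
    refine (dense_adj_mul hBdense hBclosed).mono fun x hx => ?_
    have h := h2' _ _ ((B.adjoint.pcomp B).mem_graph ⟨x, hx⟩)
    obtain ⟨s, hs, -⟩ := (mem_graph_pcomp _ _ _ _).1 h
    exact LinearPMap.mem_domain_of_mem_graph ((hgraph _ _).2 hs)
  have hSadj : ∀ x y, (x, y) ∈ B.adjoint.graph →
      (x, ContinuousLinearMap.adjoint A y) ∈ (B.pcomp (ofCLM A)).adjoint.graph := by
    intro x y h
    rw [mem_graph_adj hBdense] at h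
    rw [mem_graph_adj hSd]
    intro a b hab
    rw [h _ _ ((hgraph _ _).1 hab), ContinuousLinearMap.adjoint_inner_right]
  have g1 : (B.pcomp (ofCLM A)).pcomp (B.pcomp (ofCLM A)).adjoint =
      (B.adjoint.pcomp B).pcomp (ofCLM (ContinuousLinearMap.adjoint A * A)) := by
    refine eq_of_core A hBdense hBclosed (fun x y u v h h' => symm_mul_adj hSd h h')
      (exists_one_add_mul_adj hSd hSc) fun x y h => ?_
    rw [← hBB] at h
    obtain ⟨s, hs, hs'⟩ := (mem_graph_pcomp _ _ _ _).1 h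
    refine (mem_graph_pcomp _ _ _ _).2 ⟨_, hSadj _ _ hs, (hgraph _ _).2 ?_⟩
    have e : A (ContinuousLinearMap.adjoint A s) = (ContinuousLinearMap.adjoint A * A) s := by
      rw [← mul_apply_eq_comp]
      exact congrArg (fun T : H →L[ℂ] H => T s) hA
    rw [e]
    exact h1' _ _ hs'
  have g2 : (B.pcomp (ofCLM A)).adjoint.pcomp (B.pcomp (ofCLM A)) =
      (B.adjoint.pcomp B).pcomp (ofCLM (ContinuousLinearMap.adjoint A * A)) := by
    refine eq_of_core A hBdense hBclosed (fun x y u v h h' => symm_adj_mul hSd h h')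
      (exists_one_add_adj_mul hSd hSc) fun x y h => ?_
    obtain ⟨s, hs, hs'⟩ := (mem_graph_pcomp _ _ _ _).1 (h2' _ _ h)
    exact (mem_graph_pcomp _ _ _ _).2 ⟨s, (hgraph _ _).2 hs, hSadj _ _ hs'⟩
  rw [hBB]
  exact ⟨g1, g2, rfl⟩
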